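/- Let f : {0,1}ⁿ → ℝ be nonnegative and not identically zero, let ε ∈ [0,1/2] and λ = (1−2ε)². Then Ent(T_ε f) ≤ (1/𝔼f)·(1/(2 ln 2))·(Σ_{k=1}^n f̂({k})²)·λ + C·(𝔼f²/𝔼f)·λ^{4/3} + C·(𝔼²f²/𝔼³f)·λ² for some absolute constant C > 0, where Ent(g) = 𝔼[g log₂ g] − 𝔼g·log₂ 𝔼g and f̂(S) are the Walsh–Fourier coefficients of f. -/

import Mathlib

open Finset

noncomputable def expec (n : ℕ) (f : (Fin n → Bool) → ℝ) : ℝ :=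
  (∑ x : Fin n → Bool, f x) / 2 ^ n

noncomputable def walsh (n : ℕ) (S : Finset (Fin n)) (x : Fin n → Bool) : ℝ :=
  ∏ i ∈ S, (if x i then (-1 : ℝ) else 1)

noncomputable def fcoef (n : ℕ) (f : (Fin n → Bool) → ℝ) (S : Finset (Fin n)) : ℝ :=
  expec n (fun x => f x * walsh n S x)

def comp (n : ℕ) (x : Fin n → Bool) : Fin n → Bool := fun i => !(x i)

noncomputable def evenPart (n : ℕ) (f : (Fin n → Bool) → ℝ) (x : Fin n → Bool) : ℝ :=
  (f x + f (comp n x)) / 2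

noncomputable def oddPart (n : ℕ) (f : (Fin n → Bool) → ℝ) (x : Fin n → Bool) : ℝ :=
  f x - evenPart n f x

noncomputable def noiseK (n : ℕ) (ε : ℝ) (x y : Fin n → Bool) : ℝ :=
  ∏ i : Fin n, (if x i = y i then 1 - ε else ε)

noncomputable def noiseOp (n : ℕ) (ε : ℝ) (f : (Fin n → Bool) → ℝ) (x : Fin n → Bool) : ℝ :=
  ∑ y : Fin n → Bool, noiseK n ε x y * f y

noncomputable def entro (n : ℕ) (g : (Fin n → Bool) → ℝ) : ℝ :=
  expec n (fun x => g x * Real.logb 2 (g x)) - expec n g * Real.logb 2 (expec n g)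

noncomputable def varia (n : ℕ) (g : (Fin n → Bool) → ℝ) : ℝ :=
  expec n (fun x => g x ^ 2) - (expec n g) ^ 2

/-!
Normalise `𝔼 f = 1` and put `t = T_ε f - 1`, `λ = (1 - 2ε)²`. Then `Ent (T_ε f) · ln 2` is
`𝔼 [(1 + t) ln (1 + t)]`, and `(1 + t) ln (1 + t) ≤ t + t²/2 - t³/6 + t⁴/3`. The linear term has
mean zero, and `𝔼 t²` is `λ ∑ₖ f̂({k})²` up to `O(λ² 𝔼 f²)`. The leading part of `t` sits on level
one and is odd under complementing all coordinates, so averaging `t³` over antipodal points leaves a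
multiple of the even part of `t`; by AM-GM this costs the square of the even part, of mean at most
`λ² 𝔼 f²`, and a fourth power. For `λ ≤ 1/3`, Bonami's lemma gives `𝔼 t⁴ ≤ (3 λ 𝔼 f²)²`. For larger
`λ` the crude bound `(1 + t) ln (1 + t) ≤ t + t²` suffices. No term in `λ^(4/3)` arises.
-/

section Expectation

variable {n : ℕ} {f g : (Fin n → Bool) → ℝ}

theorem expec_const (c : ℝ) : expec n (fun _ => c) = c := by
  simp [expec]

theorem expec_add (f g : (Fin n → Bool) → ℝ) :
    expec n (fun x => f x + g x) = expec n f + expec n g := by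
  simp only [expec, sum_add_distrib, add_div]

theorem expec_sub (f g : (Fin n → Bool) → ℝ) :
    expec n (fun x => f x - g x) = expec n f - expec n g := by
  simp only [expec, sum_sub_distrib, sub_div]

theorem expec_const_mul (c : ℝ) (f : (Fin n → Bool) → ℝ) :
    expec n (fun x => c * f x) = c * expec n f := by
  simp only [expec, ← mul_sum, mul_div_assoc]

theorem expec_sum {ι : Type*} (s : Finset ι) (f : ι → (Fin n → Bool) → ℝ) :
    expec n (fun x => ∑ i ∈ s, f i x) = ∑ i ∈ s, expec n (f i) := by
  simp only [expec]
  rw [sum_comm, sum_div]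

theorem expec_mono (h : ∀ x, f x ≤ g x) : expec n f ≤ expec n g :=
  div_le_div_of_nonneg_right (sum_le_sum fun x _ => h x) (by positivity)

theorem expec_nonneg (hf : ∀ x, 0 ≤ f x) : 0 ≤ expec n f :=
  div_nonneg (sum_nonneg fun x _ => hf x) (by positivity)

theorem expec_pos (hf : ∀ x, 0 ≤ f x) (hne : ∃ x, f x ≠ 0) : 0 < expec n f := by
  obtain ⟨x, hx⟩ := hne
  exact div_pos (sum_pos' (fun y _ => hf y) ⟨x, mem_univ x, (hf x).lt_of_ne' hx⟩) (by positivity)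

theorem expec_comp_bijective {σ : (Fin n → Bool) → (Fin n → Bool)} (hσ : σ.Bijective)
    (f : (Fin n → Bool) → ℝ) : expec n (fun x => f (σ x)) = expec n f := by
  rw [expec, hσ.sum_comp f, expec]

theorem expec_mul_sq_le (f g : (Fin n → Bool) → ℝ) :
    expec n (fun x => f x * g x) ^ 2
      ≤ expec n (fun x => f x ^ 2) * expec n (fun x => g x ^ 2) := by
  unfold expec
  rw [div_pow, div_mul_div_comm, ← sq]
  gcongr
  exact sum_mul_sq_le_sq_mul_sq univ f g

theorem expec_sq_le (f : (Fin n → Bool) → ℝ) : expec n f ^ 2 ≤ expec n (fun x => f x ^ 2) := by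
  simpa [expec_const] using expec_mul_sq_le f fun _ => 1

/-- The deviation of a function on the cube from its mean. -/
noncomputable def centered (n : ℕ) (f : (Fin n → Bool) → ℝ) (x : Fin n → Bool) : ℝ :=
  f x - expec n f

theorem expec_centered (f : (Fin n → Bool) → ℝ) : expec n (centered n f) = 0 := by
  unfold centered
  rw [expec_sub, expec_const, sub_self]

end Expectation

section Walsh

variable {n : ℕ}

theorem comp_involutive : Function.Involutive (comp n) := fun x => by
  funext i
  exact Bool.not_not (x i)

theorem walsh_empty (x : Fin n → Bool) : walsh n ∅ x = 1 :=
  prod_empty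

theorem walsh_mul_self (S : Finset (Fin n)) (x : Fin n → Bool) :
    walsh n S x * walsh n S x = 1 := by
  rw [walsh, ← prod_mul_distrib]
  exact prod_eq_one fun i _ => by split_ifs <;> norm_num

theorem walsh_insert {a : Fin n} {S : Finset (Fin n)} (ha : a ∉ S) (x : Fin n → Bool) :
    walsh n (insert a S) x = walsh n {a} x * walsh n S x := by
  simp only [walsh, prod_insert ha, prod_singleton]

theorem walsh_comp (S : Finset (Fin n)) (x : Fin n → Bool) :
    walsh n S (comp n x) = (-1) ^ #S * walsh n S x := by
  unfold walsh comp
  rw [← prod_const, ← prod_mul_distrib]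
  exact prod_congr rfl fun i _ => by cases x i <;> simp

/-- The involution of the cube that negates the coordinate `a`; it isolates the dependence of a
function on that coordinate. -/
def flipAt (a : Fin n) (x : Fin n → Bool) : Fin n → Bool :=
  Function.update x a (!(x a))

theorem flipAt_involutive (a : Fin n) : Function.Involutive (flipAt a) := fun x => by
  simp [flipAt]

theorem walsh_flipAt_of_notMem {a : Fin n} {S : Finset (Fin n)} (ha : a ∉ S)
    (x : Fin n → Bool) : walsh n S (flipAt a x) = walsh n S x :=
  prod_congr rfl fun i hi => by rw [flipAt, Function.update_of_ne (ne_of_mem_of_not_mem hi ha)]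

theorem walsh_singleton_flipAt (a : Fin n) (x : Fin n → Bool) :
    walsh n {a} (flipAt a x) = -walsh n {a} x := by
  cases h : x a <;> simp [walsh, flipAt, h]

theorem walsh_flipAt_of_mem {a : Fin n} {S : Finset (Fin n)} (ha : a ∈ S)
    (x : Fin n → Bool) : walsh n S (flipAt a x) = -walsh n S x := by
  have ha' : a ∉ S.erase a := notMem_erase a S
  rw [← insert_erase ha, walsh_insert ha', walsh_insert ha', walsh_singleton_flipAt,
    walsh_flipAt_of_notMem ha', neg_mul]

theorem expec_eq_zero_of_flipAt_eq_neg (a : Fin n) {f : (Fin n → Bool) → ℝ}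
    (hf : ∀ x, f (flipAt a x) = -f x) : expec n f = 0 := by
  have hflip : expec n (fun x => -1 * f x) = expec n f := by
    simpa only [hf, neg_one_mul] using expec_comp_bijective (flipAt_involutive a).bijective f
  rw [expec_const_mul] at hflip
  linarith

theorem expec_walsh (S : Finset (Fin n)) : expec n (walsh n S) = if S = ∅ then 1 else 0 := by
  split_ifs with hS
  · subst hS
    simp only [funext walsh_empty, expec_const]
  · obtain ⟨a, ha⟩ := nonempty_iff_ne_empty.2 hS
    exact expec_eq_zero_of_flipAt_eq_neg a (walsh_flipAt_of_mem ha)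

theorem sum_walsh_mul_walsh (x y : Fin n → Bool) :
    ∑ S, walsh n S x * walsh n S y = if x = y then 2 ^ n else 0 := by
  have hfactor : ∀ i, 1 + (if x i then (-1 : ℝ) else 1) * (if y i then -1 else 1)
      = if x i = y i then 2 else 0 := fun i => by
    cases x i <;> cases y i <;> norm_num
  simp only [walsh, ← prod_mul_distrib]
  rw [← powerset_univ, ← prod_one_add]
  simp only [hfactor, Fintype.prod_ite_zero, funext_iff, prod_const, card_univ, Fintype.card_fin]

end Walsh

section Fourier

variable {n : ℕ}

theorem fcoef_empty (f : (Fin n → Bool) → ℝ) : fcoef n f ∅ = expec n f := by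
  simp only [fcoef, walsh_empty, mul_one]

theorem fcoef_const_mul (c : ℝ) (f : (Fin n → Bool) → ℝ) (S : Finset (Fin n)) :
    fcoef n (fun x => c * f x) S = c * fcoef n f S := by
  simp only [fcoef, mul_assoc, expec_const_mul]

theorem fcoef_centered (f : (Fin n → Bool) → ℝ) (S : Finset (Fin n)) :
    fcoef n (centered n f) S = if S = ∅ then 0 else fcoef n f S := by
  have h : fcoef n (centered n f) S = fcoef n f S - expec n f * expec n (walsh n S) := by
    simp only [fcoef, centered, sub_mul, expec_sub, expec_const_mul]
  rw [h, expec_walsh]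
  split_ifs with hS
  · rw [hS, fcoef_empty, mul_one, sub_self]
  · rw [mul_zero, sub_zero]

theorem fcoef_evenPart (f : (Fin n → Bool) → ℝ) (S : Finset (Fin n)) :
    fcoef n (evenPart n f) S = if Even #S then fcoef n f S else 0 := by
  have hcomp : expec n (fun x => f (comp n x) * walsh n S x) = (-1) ^ #S * fcoef n f S := by
    rw [← expec_comp_bijective comp_involutive.bijective]
    simp only [comp_involutive _, walsh_comp, mul_left_comm _ ((-1 : ℝ) ^ #S), expec_const_mul]
    rfl
  have h : fcoef n (evenPart n f) S = 1 / 2 * (fcoef n f S + (-1) ^ #S * fcoef n f S) := by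
    rw [← hcomp, fcoef, fcoef, ← expec_add, ← expec_const_mul]
    congr 1
    funext x
    rw [evenPart]
    ring
  rw [h]
  split_ifs with hS
  · rw [hS.neg_one_pow]
    ring
  · rw [(Nat.not_even_iff_odd.1 hS).neg_one_pow]
    ring

theorem sum_fcoef_mul_walsh (f : (Fin n → Bool) → ℝ) (x : Fin n → Bool) :
    ∑ S, fcoef n f S * walsh n S x = f x := by
  have h : ∀ S, fcoef n f S * walsh n S x
      = (∑ y, f y * (walsh n S y * walsh n S x)) / 2 ^ n := fun S => by
    simp only [fcoef, expec, div_mul_eq_mul_div, sum_mul, mul_assoc]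
  simp only [h]
  rw [← sum_div, sum_comm]
  simp [← mul_sum, sum_walsh_mul_walsh]

theorem expec_mul_eq_sum_fcoef_mul_fcoef (f g : (Fin n → Bool) → ℝ) :
    expec n (fun x => f x * g x) = ∑ S, fcoef n f S * fcoef n g S := by
  calc expec n (fun x => f x * g x)
      = expec n (fun x => ∑ S, fcoef n f S * (g x * walsh n S x)) := by
        congr 1
        funext x
        rw [← sum_fcoef_mul_walsh f x, sum_mul]
        exact sum_congr rfl fun S _ => by ring
    _ = ∑ S, fcoef n f S * fcoef n g S := by
        simp only [expec_sum, expec_const_mul]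
        rfl

theorem expec_sq_eq_sum_fcoef_sq (f : (Fin n → Bool) → ℝ) :
    expec n (fun x => f x ^ 2) = ∑ S, fcoef n f S ^ 2 := by
  simpa only [sq] using expec_mul_eq_sum_fcoef_mul_fcoef f f

end Fourier

section Noise

variable {n : ℕ} {ε : ℝ} {f : (Fin n → Bool) → ℝ}

theorem noiseOp_nonneg (h0 : 0 ≤ ε) (h1 : ε ≤ 1) (hf : ∀ x, 0 ≤ f x) (x : Fin n → Bool) :
    0 ≤ noiseOp n ε f x := by
  refine sum_nonneg fun y _ => mul_nonneg (prod_nonneg fun i _ => ?_) (hf y)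
  split_ifs <;> linarith

theorem noiseOp_const_mul (ε c : ℝ) (f : (Fin n → Bool) → ℝ) :
    noiseOp n ε (fun x => c * f x) = fun x => c * noiseOp n ε f x := by
  funext x
  simp only [noiseOp, mul_sum, mul_left_comm c]

theorem noiseK_comm (ε : ℝ) (x y : Fin n → Bool) : noiseK n ε x y = noiseK n ε y x := by
  simp only [noiseK, eq_comm]

theorem expec_noiseOp_mul (ε : ℝ) (f g : (Fin n → Bool) → ℝ) :
    expec n (fun x => noiseOp n ε f x * g x) = expec n (fun x => f x * noiseOp n ε g x) := by
  simp only [expec, noiseOp, sum_mul, mul_sum]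
  rw [sum_comm]
  refine congrArg (· / 2 ^ n) (sum_congr rfl fun y _ => sum_congr rfl fun x _ => ?_)
  rw [noiseK_comm ε x y]
  ring

theorem noiseOp_walsh (ε : ℝ) (S : Finset (Fin n)) (x : Fin n → Bool) :
    noiseOp n ε (walsh n S) x = (1 - 2 * ε) ^ #S * walsh n S x := by
  have hwalsh : ∀ y, walsh n S y = ∏ i, if i ∈ S then (if y i then (-1 : ℝ) else 1) else 1 :=
    fun y => (Fintype.prod_ite_mem S _).symm
  have hcoord : ∀ i, ∑ b : Bool, (if x i = b then 1 - ε else ε)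
        * (if i ∈ S then (if b then (-1 : ℝ) else 1) else 1)
      = if i ∈ S then (1 - 2 * ε) * (if x i then (-1 : ℝ) else 1) else 1 := fun i => by
    cases x i <;> by_cases hi : i ∈ S <;> simp [hi] <;> ring
  simp only [noiseOp, noiseK, hwalsh, ← prod_mul_distrib]
  rw [← Fintype.prod_sum fun i b => (if x i = b then 1 - ε else ε)
    * (if i ∈ S then (if b then (-1 : ℝ) else 1) else 1)]
  simp only [hcoord, Fintype.prod_ite_mem, prod_mul_distrib, prod_const]

theorem fcoef_noiseOp (ε : ℝ) (f : (Fin n → Bool) → ℝ) (S : Finset (Fin n)) :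
    fcoef n (noiseOp n ε f) S = (1 - 2 * ε) ^ #S * fcoef n f S := by
  simp only [fcoef, expec_noiseOp_mul, noiseOp_walsh, mul_left_comm _ ((1 - 2 * ε) ^ #S),
    expec_const_mul]

theorem expec_noiseOp (ε : ℝ) (f : (Fin n → Bool) → ℝ) :
    expec n (noiseOp n ε f) = expec n f := by
  rw [← fcoef_empty, fcoef_noiseOp, card_empty, pow_zero, one_mul, fcoef_empty]

theorem fcoef_centered_noiseOp_sq (ε : ℝ) (f : (Fin n → Bool) → ℝ) (S : Finset (Fin n)) :
    fcoef n (centered n (noiseOp n ε f)) S ^ 2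
      = if 1 ≤ #S then ((1 - 2 * ε) ^ 2) ^ #S * fcoef n f S ^ 2 else 0 := by
  rw [fcoef_centered, fcoef_noiseOp]
  rcases S.eq_empty_or_nonempty with rfl | hS
  · simp
  · rw [if_neg hS.ne_empty, if_pos (one_le_card.2 hS), mul_pow, pow_right_comm]

theorem expec_centered_noiseOp_sq (ε : ℝ) (f : (Fin n → Bool) → ℝ) :
    expec n (fun x => centered n (noiseOp n ε f) x ^ 2)
      = ∑ S with 1 ≤ #S, ((1 - 2 * ε) ^ 2) ^ #S * fcoef n f S ^ 2 := by
  simp only [expec_sq_eq_sum_fcoef_sq, fcoef_centered_noiseOp_sq, sum_filter]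

theorem expec_evenPart_centered_noiseOp_sq_le (ε : ℝ) (f : (Fin n → Bool) → ℝ) :
    expec n (fun x => evenPart n (centered n (noiseOp n ε f)) x ^ 2)
      ≤ ∑ S with 2 ≤ #S, ((1 - 2 * ε) ^ 2) ^ #S * fcoef n f S ^ 2 := by
  rw [expec_sq_eq_sum_fcoef_sq, sum_filter]
  refine sum_le_sum fun S _ => ?_
  rw [fcoef_evenPart, ite_pow, fcoef_centered_noiseOp_sq, zero_pow two_ne_zero]
  have hterm : 0 ≤ ((1 - 2 * ε) ^ 2) ^ #S * fcoef n f S ^ 2 := by positivity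
  by_cases heven : Even #S
  · have hcard : 1 ≤ #S ↔ 2 ≤ #S := by grind
    simp only [heven, hcard, if_true, le_refl]
  · rw [if_neg heven]
    split_ifs <;> simp only [hterm, le_refl]

end Noise

section Bonami

variable {n : ℕ}

theorem expec_add_walsh_mul_pow_four {a : Fin n} {P Q : (Fin n → Bool) → ℝ}
    (hP : ∀ x, P (flipAt a x) = P x) (hQ : ∀ x, Q (flipAt a x) = Q x) :
    expec n (fun x => (P x + walsh n {a} x * Q x) ^ 4)
      = expec n (fun x => P x ^ 4) + 6 * expec n (fun x => P x ^ 2 * Q x ^ 2)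
        + expec n (fun x => Q x ^ 4) := by
  have hodd : expec n (fun x => walsh n {a} x * (4 * P x ^ 3 * Q x + 4 * P x * Q x ^ 3)) = 0 :=
    expec_eq_zero_of_flipAt_eq_neg a fun x => by
      rw [walsh_singleton_flipAt, hP, hQ, neg_mul]
  have hexpand : ∀ x, (P x + walsh n {a} x * Q x) ^ 4
      = P x ^ 4 + 6 * (P x ^ 2 * Q x ^ 2) + Q x ^ 4
        + walsh n {a} x * (4 * P x ^ 3 * Q x + 4 * P x * Q x ^ 3) := fun x => by
    have hw := walsh_mul_self {a} x
    linear_combination (6 * P x ^ 2 * Q x ^ 2 + 4 * P x * Q x ^ 3 * walsh n {a} x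
      + Q x ^ 4 * (walsh n {a} x * walsh n {a} x + 1)) * hw
  simp only [hexpand, expec_add, expec_const_mul, hodd, add_zero]

theorem expec_add_walsh_mul_pow_four_le {a : Fin n} {P Q : (Fin n → Bool) → ℝ}
    (hP : ∀ x, P (flipAt a x) = P x) (hQ : ∀ x, Q (flipAt a x) = Q x) {p q : ℝ}
    (hp : 0 ≤ p) (hq : 0 ≤ q) (hPp : expec n (fun x => P x ^ 4) ≤ p ^ 2)
    (hQq : expec n (fun x => Q x ^ 4) ≤ q ^ 2) :
    expec n (fun x => (P x + walsh n {a} x * Q x) ^ 4) ≤ (p + 3 * q) ^ 2 := by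
  have hmixed : expec n (fun x => P x ^ 2 * Q x ^ 2) ≤ p * q := by
    refine le_of_sq_le_sq ?_ (mul_nonneg hp hq)
    calc expec n (fun x => P x ^ 2 * Q x ^ 2) ^ 2
        ≤ expec n (fun x => (P x ^ 2) ^ 2) * expec n (fun x => (Q x ^ 2) ^ 2) :=
          expec_mul_sq_le _ _
      _ = expec n (fun x => P x ^ 4) * expec n (fun x => Q x ^ 4) := by
          simp only [← pow_mul]
      _ ≤ p ^ 2 * q ^ 2 :=
          mul_le_mul hPp hQq (expec_nonneg fun x => by positivity) (sq_nonneg p)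
      _ = (p * q) ^ 2 := (mul_pow p q 2).symm
  rw [expec_add_walsh_mul_pow_four hP hQ]
  nlinarith [sq_nonneg q]

/-- The multilinear polynomial with Walsh coefficients `c S`, keeping only the `S` contained in `A`
so that one can induct on the set of coordinates. -/
noncomputable def walshSum (A : Finset (Fin n)) (c : Finset (Fin n) → ℝ) (x : Fin n → Bool) : ℝ :=
  ∑ S ∈ A.powerset, c S * walsh n S x

theorem walshSum_insert {a : Fin n} {A : Finset (Fin n)} (ha : a ∉ A) (c : Finset (Fin n) → ℝ)
    (x : Fin n → Bool) :
    walshSum (insert a A) c x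
      = walshSum A c x + walsh n {a} x * walshSum A (fun S => c (insert a S)) x := by
  simp only [walshSum, sum_powerset_insert ha, mul_sum]
  refine congrArg _ (sum_congr rfl fun S hS => ?_)
  rw [walsh_insert (notMem_mono (mem_powerset.1 hS) ha), mul_left_comm]

theorem walshSum_flipAt {a : Fin n} {A : Finset (Fin n)} (ha : a ∉ A) (c : Finset (Fin n) → ℝ)
    (x : Fin n → Bool) : walshSum A c (flipAt a x) = walshSum A c x :=
  sum_congr rfl fun S hS => by
    rw [walsh_flipAt_of_notMem (notMem_mono (mem_powerset.1 hS) ha)]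

theorem sum_powerset_insert_pow_card_mul {α R : Type*} [DecidableEq α] [CommSemiring R] {a : α}
    {A : Finset α} (ha : a ∉ A) (r : R) (d : Finset α → R) :
    ∑ S ∈ (insert a A).powerset, r ^ #S * d S
      = ∑ S ∈ A.powerset, r ^ #S * d S + r * ∑ S ∈ A.powerset, r ^ #S * d (insert a S) := by
  rw [sum_powerset_insert ha, mul_sum]
  refine congrArg _ (sum_congr rfl fun S hS => ?_)
  rw [card_insert_of_notMem (notMem_mono (mem_powerset.1 hS) ha), pow_succ', mul_assoc]

theorem expec_walshSum_pow_four_le (A : Finset (Fin n)) (c : Finset (Fin n) → ℝ) :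
    expec n (fun x => walshSum A c x ^ 4) ≤ (∑ S ∈ A.powerset, 3 ^ #S * c S ^ 2) ^ 2 := by
  induction A using Finset.induction_on generalizing c with
  | empty =>
    simp only [walshSum, powerset_empty, sum_singleton, walsh_empty, mul_one, card_empty, pow_zero,
      one_mul, expec_const]
    exact (pow_mul (c ∅) 2 2).le
  | insert a A ha ih =>
    simp only [walshSum_insert ha, sum_powerset_insert_pow_card_mul ha]
    exact expec_add_walsh_mul_pow_four_le (walshSum_flipAt ha _) (walshSum_flipAt ha _)
      (sum_nonneg fun S _ => by positivity) (sum_nonneg fun S _ => by positivity) (ih _) (ih _)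

/-- Bonami's lemma, in its `L²`–`L⁴` form. -/
theorem expec_pow_four_le (f : (Fin n → Bool) → ℝ) :
    expec n (fun x => f x ^ 4) ≤ (∑ S, 3 ^ #S * fcoef n f S ^ 2) ^ 2 := by
  simpa only [walshSum, powerset_univ, sum_fcoef_mul_walsh] using
    expec_walshSum_pow_four_le univ (fcoef n f)

theorem expec_centered_noiseOp_pow_four_le (ε : ℝ) (f : (Fin n → Bool) → ℝ) :
    expec n (fun x => centered n (noiseOp n ε f) x ^ 4)
      ≤ (∑ S with 1 ≤ #S, (3 * (1 - 2 * ε) ^ 2) ^ #S * fcoef n f S ^ 2) ^ 2 := by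
  refine (expec_pow_four_le _).trans_eq (congrArg (· ^ 2) ?_)
  simp only [fcoef_centered_noiseOp_sq, sum_filter, mul_ite, mul_zero, mul_pow _ _ #_, mul_assoc]

end Bonami

section LevelWeights

variable {α : Type*} [Fintype α]

theorem sum_le_card_pow_card_mul_le {R : Type*} [CommSemiring R] [PartialOrder R] [IsOrderedRing R]
    (k : ℕ) {r : R} (h0 : 0 ≤ r) (h1 : r ≤ 1) {d : Finset α → R} (hd : ∀ S, 0 ≤ d S) :
    ∑ S with k ≤ #S, r ^ #S * d S ≤ r ^ k * ∑ S, d S :=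
  calc ∑ S with k ≤ #S, r ^ #S * d S
      ≤ ∑ S with k ≤ #S, r ^ k * d S := sum_le_sum fun S hS =>
        mul_le_mul_of_nonneg_right (pow_le_pow_of_le_one h0 h1 (mem_filter.1 hS).2) (hd S)
    _ ≤ ∑ S, r ^ k * d S := sum_le_sum_of_subset_of_nonneg (filter_subset _ _) fun S _ _ =>
        mul_nonneg (pow_nonneg h0 k) (hd S)
    _ = r ^ k * ∑ S, d S := (mul_sum _ _ _).symm

theorem sum_one_le_card_eq_sum_singleton_add {M : Type*} [AddCommMonoid M] (w : Finset α → M) :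
    ∑ S with 1 ≤ #S, w S = ∑ i, w {i} + ∑ S with 2 ≤ #S, w S := by
  have hone : ∑ S with #S = 1, w S = ∑ i, w {i} := by
    rw [univ_filter_card_eq, powersetCard_one, sum_map]
    rfl
  rw [← sum_filter_add_sum_filter_not _ (fun S => #S = 1), filter_filter, filter_filter, ← hone]
  congr 2 <;> ext S <;> grind

end LevelWeights

section Logarithm

theorem log_le_cubic {u : ℝ} (hu : 0 < u) :
    Real.log u ≤ (u - 1) - (u - 1) ^ 2 / 2 + (u - 1) ^ 3 / 3 := by
  let φ : ℝ → ℝ := fun v => (v - 1) - (v - 1) ^ 2 / 2 + (v - 1) ^ 3 / 3 - Real.log v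
  have hderiv : ∀ v : ℝ, 0 < v → HasDerivAt φ ((v - 1) ^ 3 / v) v := fun v hv => by
    have hv1 : HasDerivAt (fun v : ℝ => v - 1) 1 v := (hasDerivAt_id v).sub_const 1
    refine (((hv1.sub ((hv1.pow 2).div_const 2)).add ((hv1.pow 3).div_const 3)).sub
      (Real.hasDerivAt_log hv.ne')).congr_deriv ?_
    field_simp
    ring
  have hdiff : DifferentiableOn ℝ φ (Set.Ioi 0) := fun v hv =>
    (hderiv v hv).differentiableAt.differentiableWithinAt
  have hmin : IsMinOn φ (Set.Ioi 0) 1 :=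
    isMinOn_Ioi_of_deriv (hderiv 1 one_pos).continuousAt
      (hdiff.mono fun v hv => hv.1) (hdiff.mono (Set.Ioi_subset_Ioi zero_le_one))
      (fun v hv => by
        rw [(hderiv v hv.1).deriv]
        exact div_nonpos_of_nonpos_of_nonneg
          (Odd.pow_nonpos (by decide) (sub_nonpos.2 hv.2.le)) hv.1.le)
      (fun v hv => by
        have hv0 : 0 < v := one_pos.trans hv
        rw [(hderiv v hv0).deriv]
        exact div_nonneg (pow_nonneg (sub_nonneg.2 (le_of_lt hv)) 3) hv0.le)
  have h : φ 1 ≤ φ u := hmin hu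
  norm_num [φ] at h
  linarith

theorem mul_log_le_quartic {u : ℝ} (hu : 0 ≤ u) :
    u * Real.log u ≤ (u - 1) + (u - 1) ^ 2 / 2 - (u - 1) ^ 3 / 6 + (u - 1) ^ 4 / 3 := by
  rcases hu.eq_or_lt with rfl | hu
  · norm_num
  · exact (mul_le_mul_of_nonneg_left (log_le_cubic hu) hu.le).trans_eq (by ring)

theorem mul_log_le_quadratic {u : ℝ} (hu : 0 ≤ u) :
    u * Real.log u ≤ (u - 1) + (u - 1) ^ 2 := by
  rcases hu.eq_or_lt with rfl | hu
  · norm_num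
  · exact (mul_le_mul_of_nonneg_left (Real.log_le_sub_one_of_pos hu) hu.le).trans_eq (by ring)

end Logarithm

section Entropy

variable {n : ℕ}

theorem neg_cube_add_cube_le (s t : ℝ) :
    -(s ^ 3 + t ^ 3) ≤ ((s + t) / 2) ^ 2 + 9 / 2 * (s ^ 4 + t ^ 4) := by
  obtain ⟨a, b, rfl, rfl⟩ : ∃ a b : ℝ, s = b + a ∧ t = b - a :=
    ⟨(s - t) / 2, (s + t) / 2, by ring, by ring⟩
  have hamgm : -2 * b * (b ^ 2 + 3 * a ^ 2) ≤ b ^ 2 + (b ^ 2 + 3 * a ^ 2) ^ 2 := by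
    nlinarith [sq_nonneg (b + (b ^ 2 + 3 * a ^ 2))]
  have hquartic : (b ^ 2 + 3 * a ^ 2) ^ 2 ≤ 9 / 2 * ((b + a) ^ 4 + (b - a) ^ 4) := by
    nlinarith [sq_nonneg (a * b), sq_nonneg (b ^ 2)]
  linarith

theorem neg_expec_cube_le (t : (Fin n → Bool) → ℝ) :
    -expec n (fun x => t x ^ 3)
      ≤ 1 / 2 * expec n (fun x => evenPart n t x ^ 2) + 9 / 2 * expec n (fun x => t x ^ 4) := by
  have hpair : ∀ x, -1 * (t x ^ 3 + t (comp n x) ^ 3)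
      ≤ evenPart n t x ^ 2 + 9 / 2 * (t x ^ 4 + t (comp n x) ^ 4) := fun x => by
    rw [neg_one_mul]
    exact neg_cube_add_cube_le (t x) (t (comp n x))
  have hmean := expec_mono hpair
  have hcomp : ∀ k, expec n (fun x => t (comp n x) ^ k) = expec n (fun x => t x ^ k) := fun k =>
    expec_comp_bijective comp_involutive.bijective fun x => t x ^ k
  simp only [expec_add, expec_const_mul, hcomp] at hmean
  linarith

theorem entro_const_mul (c : ℝ) (g : (Fin n → Bool) → ℝ) :
    entro n (fun x => c * g x) = c * entro n g := by
  have hlog : ∀ u : ℝ, c * u * Real.logb 2 (c * u)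
      = c * Real.logb 2 c * u + c * (u * Real.logb 2 u) := fun u => by
    rcases eq_or_ne c 0 with rfl | hc
    · simp
    rcases eq_or_ne u 0 with rfl | hu
    · simp
    rw [Real.logb_mul hc hu]
    ring
  simp only [entro, expec_const_mul, hlog, expec_add]
  ring

theorem log_two_mul_entro {g : (Fin n → Bool) → ℝ} (hE : expec n g = 1) :
    Real.log 2 * entro n g = expec n (fun x => g x * Real.log (g x)) := by
  rw [entro, hE, Real.logb_one, mul_zero, sub_zero, ← expec_const_mul]
  congr 1
  funext x
  rw [mul_left_comm, Real.logb, mul_div_cancel₀ _ (Real.log_pos one_lt_two).ne']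

theorem log_two_mul_entro_le {g : (Fin n → Bool) → ℝ} (hg : ∀ x, 0 ≤ g x) (hE : expec n g = 1) :
    Real.log 2 * entro n g
      ≤ 1 / 2 * expec n (fun x => centered n g x ^ 2)
        + 1 / 12 * expec n (fun x => evenPart n (centered n g) x ^ 2)
        + 13 / 12 * expec n (fun x => centered n g x ^ 4) := by
  have hpoint : ∀ x, g x * Real.log (g x)
      ≤ centered n g x + 1 / 2 * centered n g x ^ 2 + -1 / 6 * centered n g x ^ 3
        + 1 / 3 * centered n g x ^ 4 := fun x => by
    rw [centered, hE]
    exact (mul_log_le_quartic (hg x)).trans_eq (by ring)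
  have hmean := expec_mono hpoint
  simp only [expec_add, expec_const_mul, expec_centered] at hmean
  rw [log_two_mul_entro hE]
  linarith [neg_expec_cube_le (centered n g)]

theorem log_two_mul_entro_le_expec_centered_sq {g : (Fin n → Bool) → ℝ} (hg : ∀ x, 0 ≤ g x)
    (hE : expec n g = 1) :
    Real.log 2 * entro n g ≤ expec n (fun x => centered n g x ^ 2) := by
  have hpoint : ∀ x, g x * Real.log (g x) ≤ centered n g x + centered n g x ^ 2 := fun x => by
    rw [centered, hE]
    exact mul_log_le_quadratic (hg x)
  rw [log_two_mul_entro hE]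
  simpa only [expec_add, expec_centered, zero_add] using expec_mono hpoint

end Entropy

section NoisyEntropy

variable {n : ℕ} {ε : ℝ} {f : (Fin n → Bool) → ℝ}

theorem log_two_mul_entro_noiseOp_le_of_sq_le (h0 : 0 ≤ ε) (h1 : ε ≤ 1)
    (hr : (1 - 2 * ε) ^ 2 ≤ 1 / 3) (hf : ∀ x, 0 ≤ f x) (hE : expec n f = 1) :
    Real.log 2 * entro n (noiseOp n ε f)
      ≤ 1 / 2 * (∑ k, fcoef n f {k} ^ 2) * (1 - 2 * ε) ^ 2
        + 11 * expec n (fun x => f x ^ 2) ^ 2 * ((1 - 2 * ε) ^ 2) ^ 2 := by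
  have hA : 1 ≤ expec n (fun x => f x ^ 2) := by simpa [hE] using expec_sq_le f
  have hent := log_two_mul_entro_le (noiseOp_nonneg h0 h1 hf) ((expec_noiseOp ε f).trans hE)
  have hsq := expec_centered_noiseOp_sq ε f
  have heven := expec_evenPart_centered_noiseOp_sq_le ε f
  have hfour := expec_centered_noiseOp_pow_four_le ε f
  rw [expec_sq_eq_sum_fcoef_sq f] at hA ⊢
  set r := (1 - 2 * ε) ^ 2
  set A := ∑ S, fcoef n f S ^ 2
  have hr0 : 0 ≤ r := sq_nonneg _
  have htail : ∑ S with 2 ≤ #S, r ^ #S * fcoef n f S ^ 2 ≤ r ^ 2 * A :=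
    sum_le_card_pow_card_mul_le 2 hr0 (by linarith) fun S => sq_nonneg _
  have hweighted : ∑ S with 1 ≤ #S, (3 * r) ^ #S * fcoef n f S ^ 2 ≤ (3 * r) ^ 1 * A :=
    sum_le_card_pow_card_mul_le 1 (by positivity) (by linarith) fun S => sq_nonneg _
  rw [sum_one_le_card_eq_sum_singleton_add] at hsq
  simp only [card_singleton, pow_one, ← mul_sum] at hsq hweighted
  have hfour' : expec n (fun x => centered n (noiseOp n ε f) x ^ 4) ≤ 9 * (r ^ 2 * A ^ 2) :=
    (hfour.trans (pow_le_pow_left₀ (sum_nonneg fun S _ => by positivity) hweighted 2)).trans_eq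
      (by ring)
  have hAA : r ^ 2 * A ≤ r ^ 2 * A ^ 2 :=
    mul_le_mul_of_nonneg_left (le_self_pow₀ hA two_ne_zero) (sq_nonneg r)
  have hrAA : 0 ≤ r ^ 2 * A ^ 2 := by positivity
  linarith

theorem log_two_mul_entro_noiseOp_le_of_le_sq (h0 : 0 ≤ ε) (h1 : ε ≤ 1)
    (hr : 1 / 3 ≤ (1 - 2 * ε) ^ 2) (hf : ∀ x, 0 ≤ f x) (hE : expec n f = 1) :
    Real.log 2 * entro n (noiseOp n ε f)
      ≤ 3 * expec n (fun x => f x ^ 2) ^ 2 * ((1 - 2 * ε) ^ 2) ^ 2 := by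
  have hA : 1 ≤ expec n (fun x => f x ^ 2) := by simpa [hE] using expec_sq_le f
  have hent := log_two_mul_entro_le_expec_centered_sq (noiseOp_nonneg h0 h1 hf)
    ((expec_noiseOp ε f).trans hE)
  rw [expec_centered_noiseOp_sq] at hent
  have hr1 : (1 - 2 * ε) ^ 2 ≤ 1 := by nlinarith
  rw [expec_sq_eq_sum_fcoef_sq f] at hA ⊢
  set r := (1 - 2 * ε) ^ 2
  set A := ∑ S, fcoef n f S ^ 2
  have hweighted : ∑ S with 1 ≤ #S, r ^ #S * fcoef n f S ^ 2 ≤ r ^ 1 * A :=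
    sum_le_card_pow_card_mul_le 1 (sq_nonneg _) hr1 fun S => sq_nonneg _
  have hrA : 1 ≤ 3 * (r * A) := by nlinarith
  nlinarith

theorem log_two_mul_entro_noiseOp_le (h0 : 0 ≤ ε) (h1 : ε ≤ 1) (hf : ∀ x, 0 ≤ f x)
    (hE : expec n f = 1) :
    Real.log 2 * entro n (noiseOp n ε f)
      ≤ 1 / 2 * (∑ k, fcoef n f {k} ^ 2) * (1 - 2 * ε) ^ 2
        + 11 * expec n (fun x => f x ^ 2) ^ 2 * ((1 - 2 * ε) ^ 2) ^ 2 := by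
  rcases le_total ((1 - 2 * ε) ^ 2) (1 / 3) with hr | hr
  · exact log_two_mul_entro_noiseOp_le_of_sq_le h0 h1 hr hf hE
  · have hlevel : 0 ≤ 1 / 2 * (∑ k, fcoef n f {k} ^ 2) * (1 - 2 * ε) ^ 2 := by positivity
    have hquad : 0 ≤ expec n (fun x => f x ^ 2) ^ 2 * ((1 - 2 * ε) ^ 2) ^ 2 := by positivity
    linarith [log_two_mul_entro_noiseOp_le_of_le_sq h0 h1 hr hf hE]

theorem stmt_15_general (h0 : 0 ≤ ε) (h1 : ε ≤ 1) (hf : ∀ x, 0 ≤ f x) (hne : ∃ x, f x ≠ 0) :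
    entro n (noiseOp n ε f)
      ≤ (1 / expec n f) * (1 / (2 * Real.log 2)) * (∑ k, fcoef n f {k} ^ 2) * ((1 - 2 * ε) ^ 2)
        + 11 / Real.log 2 * ((expec n (fun x => f x ^ 2)) ^ 2 / (expec n f) ^ 3)
          * ((1 - 2 * ε) ^ 2) ^ 2 := by
  have hlog : 0 < Real.log 2 := Real.log_pos one_lt_two
  have hμ : 0 < expec n f := expec_pos hf hne
  generalize hmean : expec n f = μ at hμ ⊢
  have hnormalized := log_two_mul_entro_noiseOp_le (f := fun x => μ⁻¹ * f x) h0 h1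
    (fun x => mul_nonneg (inv_nonneg.2 hμ.le) (hf x))
    (by rw [expec_const_mul, hmean, inv_mul_cancel₀ hμ.ne'])
  simp only [noiseOp_const_mul, entro_const_mul, fcoef_const_mul, mul_pow, expec_const_mul,
    ← mul_sum] at hnormalized
  refine le_of_mul_le_mul_left (hnormalized.trans_eq' ?_ |>.trans_eq ?_)
    (mul_pos hlog (inv_pos.2 hμ))
  · ring
  · field_simp

end NoisyEntropy

theorem stmt_15 :
    ∃ C : ℝ, 0 < C ∧
      ∀ (n : ℕ) (ε : ℝ), 0 ≤ ε → ε ≤ 1/2 →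
        ∀ f : (Fin n → Bool) → ℝ, (∀ x, 0 ≤ f x) → (∃ x, f x ≠ 0) →
          entro n (noiseOp n ε f)
            ≤ (1 / expec n f) * (1 / (2 * Real.log 2)) * (∑ k : Fin n, fcoef n f {k} ^ 2)
                * ((1 - 2 * ε) ^ 2)
              + C * (expec n (fun x => f x ^ 2) / expec n f) * ((1 - 2 * ε) ^ 2) ^ ((4 : ℝ) / 3)
              + C * ((expec n (fun x => f x ^ 2)) ^ 2 / (expec n f) ^ 3) * ((1 - 2 * ε) ^ 2) ^ 2 := by
  refine ⟨11 / Real.log 2, by positivity, fun n ε h0 h1 f hf hne => ?_⟩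
  have hμ : 0 < expec n f := expec_pos hf hne
  have hA : 0 ≤ expec n (fun x => f x ^ 2) := expec_nonneg fun x => sq_nonneg _
  exact (stmt_15_general h0 (by linarith) hf hne).trans
    (add_le_add_left (le_add_of_nonneg_right (by positivity)) _)
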